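/- For every t > 0 there exists a constant C ∈ (0,1] such that for all x, y ∈ [0,1]: 2C·sin(πx)·sin(πy) ≤ p^1_t(x,y) ≤ 2C^{−1}·sin(πx)·sin(πy). -/

import Mathlib

open Real MeasureTheory Set Filter

/-- Transition density of Brownian motion killed upon exiting `(0,a)`:
`p^a_t(x,y) = (2/a)·∑_{n≥1} exp(−π²n²t/(2a²))·sin(πnx/a)·sin(πny/a)`. -/
noncomputable def pker (a t x y : ℝ) : ℝ :=
  (2/a) * ∑' n : ℕ, Real.exp (-(π^2) * ((n : ℝ) + 1)^2 * t / (2 * a^2)) *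
    Real.sin (π * ((n : ℝ) + 1) * x / a) * Real.sin (π * ((n : ℝ) + 1) * y / a)

/-!
With `q = exp (-π² t / (2 a²))`, `α = π x / a` and `β = π y / a`, the product formula for sines
makes the killed heat kernel a multiple of `θ (α - β) - θ (α + β)`, where
`θ z = ∑ q^{j²} cos (j z)` over `j : ℤ`. Jacobi's triple product identity writes `θ z` as a
positive constant times `∏ (1 + 2 q^{2m+1} cos z + q^{4m+2})`. Every factor is nonnegative and
nondecreasing in `cos z`, and the factor `m = 0` has slope `2 q`, so `θ` grows at least linearly
in `cos z`; the lower bound follows from `cos (α - β) - cos (α + β) = 2 sin α sin β`. The upper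
bound is termwise, from `|sin (n x)| ≤ n |sin x|`.

The triple product identity is the limit `M = N → ∞` of its finite version, proved by induction
on the number of factors.
-/

section FiniteTripleProduct

variable {𝕜 : Type*} [Field 𝕜] {q w : 𝕜}

/-- The reciprocal `1 / (q; q)_k` of the `q`-Pochhammer symbol, extended by zero to `k < 0`. -/
noncomputable def invQPochhammer (q : 𝕜) (k : ℤ) : 𝕜 :=
  if k < 0 then 0 else ∏ i ∈ Finset.range k.toNat, (1 - q ^ (i + 1))⁻¹

lemma invQPochhammer_of_neg {k : ℤ} (hk : k < 0) : invQPochhammer q k = 0 := if_pos hk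

lemma invQPochhammer_natCast (q : 𝕜) (n : ℕ) :
    invQPochhammer q n = ∏ i ∈ Finset.range n, (1 - q ^ (i + 1))⁻¹ := by
  simp [invQPochhammer]

lemma invQPochhammer_sub_one (hq : ∀ n : ℕ, q ^ (n + 1) ≠ 1) (k : ℤ) :
    invQPochhammer q (k - 1) = (1 - q ^ k) * invQPochhammer q k := by
  rcases lt_trichotomy k 0 with hk | rfl | hk
  · rw [invQPochhammer_of_neg hk, invQPochhammer_of_neg (by omega), mul_zero]
  · simp [invQPochhammer_of_neg]
  · obtain ⟨n, rfl⟩ : ∃ n : ℕ, k = (n + 1 : ℕ) := ⟨(k - 1).toNat, by omega⟩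
    have hn : 1 - q ^ (n + 1) ≠ 0 := sub_ne_zero.2 (hq n).symm
    rw [show ((n + 1 : ℕ) : ℤ) - 1 = n by push_cast; ring, invQPochhammer_natCast,
      invQPochhammer_natCast, Finset.prod_range_succ, zpow_natCast, mul_left_comm,
      mul_inv_cancel₀ hn, mul_one]

/-- The `j`-th Laurent term, in `w`, of
`(q²; q²)_{M + N}⁻¹ ∏_{m < M} (1 + q^{2m+1} w) ∏_{m < N} (1 + q^{2m+1} w⁻¹)`. -/
noncomputable def tripleProductTerm (q w : 𝕜) (M N : ℕ) (j : ℤ) : 𝕜 :=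
  q ^ (j ^ 2) * (invQPochhammer (q ^ 2) (M - j) * invQPochhammer (q ^ 2) (N + j)) * w ^ j

lemma tripleProductTerm_neg (q w : 𝕜) (M N : ℕ) (j : ℤ) :
    tripleProductTerm q w M N (-j) = tripleProductTerm q w⁻¹ N M j := by
  simp only [tripleProductTerm, neg_sq, sub_neg_eq_add, ← sub_eq_add_neg, zpow_neg, inv_zpow]
  ring

lemma tripleProductTerm_zero_zero (q w : 𝕜) (j : ℤ) :
    tripleProductTerm q w 0 0 j = if j = 0 then 1 else 0 := by
  rcases lt_trichotomy j 0 with hj | rfl | hj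
  · simp [tripleProductTerm, invQPochhammer_of_neg hj, hj.ne]
  · simp [tripleProductTerm, invQPochhammer]
  · simp [tripleProductTerm, invQPochhammer_of_neg (neg_neg_of_pos hj), hj.ne']

-- Up to the factor `q^{j²} w^j`, this is the `q`-Pascal rule for the Gaussian binomial coefficients
-- `(q²; q²)_{M+N} / ((q²; q²)_{M-j} (q²; q²)_{N+j})`.
lemma tripleProductTerm_succ_left (hq₀ : q ≠ 0) (hq : ∀ n : ℕ, (q ^ 2) ^ (n + 1) ≠ 1)
    (hw : w ≠ 0) (M N : ℕ) (j : ℤ) :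
    (1 - (q ^ 2) ^ (M + N + 1)) * tripleProductTerm q w (M + 1) N j =
      tripleProductTerm q w M N j +
        q ^ (2 * M + 1) * w * tripleProductTerm q w M N (j - 1) := by
  have hM := invQPochhammer_sub_one hq (M + 1 - j)
  have hN := invQPochhammer_sub_one hq (N + j)
  rw [show (M : ℤ) + 1 - j - 1 = M - j by ring] at hM
  have hsq : q ^ (j - 1) ^ 2 = q ^ j ^ 2 * q / (q ^ 2) ^ j := by
    rw [← zpow_natCast q 2, ← zpow_mul, Nat.cast_two,
      show (j - 1) ^ 2 = j ^ 2 + 1 - 2 * j by ring, zpow_sub₀ hq₀, zpow_add_one₀ hq₀]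
  have hMpow : (q ^ 2) ^ ((M : ℤ) + 1 - j) = q ^ (2 * M) * q ^ 2 / (q ^ 2) ^ j := by
    rw [zpow_sub₀ (pow_ne_zero 2 hq₀), zpow_add_one₀ (pow_ne_zero 2 hq₀), zpow_natCast, pow_mul]
  have hNpow : (q ^ 2) ^ ((N : ℤ) + j) = q ^ (2 * N) * (q ^ 2) ^ j := by
    rw [zpow_add₀ (pow_ne_zero 2 hq₀), zpow_natCast, pow_mul]
  have hj : (q ^ 2) ^ j ≠ 0 := zpow_ne_zero j (pow_ne_zero 2 hq₀)
  simp only [tripleProductTerm]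
  rw [show (M : ℤ) - (j - 1) = M + 1 - j by ring, show (N : ℤ) + (j - 1) = N + j - 1 by ring,
    hM, hN, hsq, hMpow, hNpow, zpow_sub_one₀ hw, Nat.cast_succ]
  field_simp
  ring

variable [TopologicalSpace 𝕜]

lemma hasSum_tripleProductTerm_swap {M N : ℕ} {S : 𝕜}
    (h : HasSum (tripleProductTerm q w⁻¹ N M) S) : HasSum (tripleProductTerm q w M N) S := by
  rw [← (Equiv.neg ℤ).hasSum_iff]
  exact h.congr_fun fun j => tripleProductTerm_neg q w M N j

variable [IsTopologicalRing 𝕜]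

lemma hasSum_tripleProductTerm_succ_left (hq₀ : q ≠ 0) (hq : ∀ n : ℕ, (q ^ 2) ^ (n + 1) ≠ 1)
    (hw : w ≠ 0) {M N : ℕ} {S : 𝕜}
    (h : HasSum (tripleProductTerm q w M N) (S * invQPochhammer (q ^ 2) (M + N : ℕ))) :
    HasSum (tripleProductTerm q w (M + 1) N)
      (S * (1 + q ^ (2 * M + 1) * w) * invQPochhammer (q ^ 2) (M + 1 + N : ℕ)) := by
  have hd : 1 - (q ^ 2) ^ (M + N + 1) ≠ 0 := sub_ne_zero.2 (hq _).symm
  have hshift := (((Equiv.subRight (1 : ℤ)).hasSum_iff.2 h).mul_left (q ^ (2 * M + 1) * w))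
  have hpoch := invQPochhammer_sub_one hq (M + 1 + N : ℕ)
  rw [zpow_natCast, show ((M + 1 + N : ℕ) : ℤ) - 1 = (M + N : ℕ) by push_cast; ring,
    add_right_comm M 1 N] at hpoch
  rw [← hasSum_mul_left_iff hd]
  convert h.add hshift using 1
  · funext j
    exact tripleProductTerm_succ_left hq₀ hq hw M N j
  · rw [hpoch, add_right_comm M 1 N]
    ring

theorem hasSum_tripleProductTerm (hq₀ : q ≠ 0) (hq : ∀ n : ℕ, (q ^ 2) ^ (n + 1) ≠ 1)
    (hw : w ≠ 0) (M N : ℕ) :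
    HasSum (tripleProductTerm q w M N)
      ((∏ m ∈ Finset.range M, (1 + q ^ (2 * m + 1) * w)) *
        (∏ m ∈ Finset.range N, (1 + q ^ (2 * m + 1) * w⁻¹)) *
        invQPochhammer (q ^ 2) (M + N : ℕ)) := by
  induction M with
  | zero =>
    refine hasSum_tripleProductTerm_swap ?_
    induction N with
    | zero =>
      convert hasSum_ite_eq (0 : ℤ) (1 : 𝕜) using 1
      · exact funext (tripleProductTerm_zero_zero q w⁻¹)
      · simp [invQPochhammer]
    | succ N ih =>
      have hstep := hasSum_tripleProductTerm_succ_left (N := 0) hq₀ hq (inv_ne_zero hw)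
        (by simpa using ih)
      simpa [Finset.prod_range_succ] using hstep
  | succ M ih =>
    rw [Finset.prod_range_succ, mul_right_comm (∏ m ∈ Finset.range M, _)]
    exact hasSum_tripleProductTerm_succ_left hq₀ hq hw ih

end FiniteTripleProduct

section TripleProduct

variable {𝕜 : Type*} [NormedField 𝕜] {q w : 𝕜}

lemma pow_ne_one_of_norm_lt_one (hq : ‖q‖ < 1) {n : ℕ} (hn : n ≠ 0) : q ^ n ≠ 1 := fun h => by
  simpa [← norm_pow, h] using pow_lt_one₀ (norm_nonneg q) hq hn

lemma summable_norm_pow_comp {e : ℕ → ℕ} (he : ∀ n, n ≤ e n) (hq : ‖q‖ < 1) :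
    Summable fun n => ‖q ^ e n‖ := by
  refine (summable_geometric_of_lt_one (norm_nonneg q) hq).of_nonneg_of_le
    (fun n => norm_nonneg _) fun n => ?_
  rw [norm_pow]
  exact pow_le_pow_of_le_one (norm_nonneg q) hq.le (he n)

lemma summable_pow_sq_mul_pow {ρ s : ℝ} (hρ₀ : 0 < ρ) (hρ₁ : ρ < 1) (hs : 0 < s) :
    Summable fun n : ℕ => ρ ^ n ^ 2 * s ^ n := by
  have hratio (n : ℕ) :
      ‖ρ ^ (n + 1) ^ 2 * s ^ (n + 1)‖ / ‖ρ ^ n ^ 2 * s ^ n‖ = (ρ ^ 2) ^ n * (ρ * s) := by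
    rw [norm_of_nonneg (by positivity), norm_of_nonneg (by positivity)]
    field_simp
    ring
  refine summable_of_ratio_test_tendsto_lt_one zero_lt_one
    (.of_forall fun n => by positivity) ?_
  simp only [hratio]
  simpa using (tendsto_pow_atTop_nhds_zero_of_lt_one (sq_nonneg ρ)
    (pow_lt_one₀ hρ₀.le hρ₁ two_ne_zero)).mul_const (ρ * s)

lemma summable_norm_zpow_sq_mul_zpow (hq₀ : q ≠ 0) (hq : ‖q‖ < 1) (hw : w ≠ 0) :
    Summable fun j : ℤ => ‖q ^ j ^ 2 * w ^ j‖ := by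
  have hq' := norm_pos_iff.2 hq₀
  have hw' := norm_pos_iff.2 hw
  simp only [norm_mul, norm_zpow]
  refine .of_nat_of_neg ?_ ?_
  · exact_mod_cast summable_pow_sq_mul_pow hq' hq hw'
  · simp only [neg_sq, zpow_neg, ← inv_zpow]
    exact_mod_cast summable_pow_sq_mul_pow hq' hq (inv_pos.2 hw')

variable [CompleteSpace 𝕜]

lemma multipliable_one_add_pow_mul (hq : ‖q‖ < 1) (w : 𝕜) :
    Multipliable fun m : ℕ => 1 + q ^ (2 * m + 1) * w := by
  refine multipliable_one_add_of_summable ?_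
  simp only [norm_mul]
  exact (summable_norm_pow_comp (fun n => by omega) hq).mul_right ‖w‖

lemma multipliable_one_sub_pow_comp {e : ℕ → ℕ} (he : ∀ n, n ≤ e n) (hq : ‖q‖ < 1) :
    Multipliable fun i => 1 - q ^ e i := by
  simp only [sub_eq_add_neg]
  refine multipliable_one_add_of_summable ?_
  simpa only [norm_neg] using summable_norm_pow_comp he hq

lemma tprod_one_sub_pow_comp_ne_zero {e : ℕ → ℕ} (he : ∀ n, n < e n) (hq : ‖q‖ < 1) :
    ∏' i, (1 - q ^ e i) ≠ 0 := by
  simp only [sub_eq_add_neg]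
  refine tprod_one_add_ne_zero_of_summable (fun i => ?_) ?_
  · rw [← sub_eq_add_neg]
    exact sub_ne_zero.2 (pow_ne_one_of_norm_lt_one hq (Nat.ne_zero_of_lt (he i))).symm
  · simpa only [norm_neg] using summable_norm_pow_comp (fun n => (he n).le) hq

lemma tendsto_invQPochhammer (hq : ‖q‖ < 1) :
    Tendsto (invQPochhammer q) atTop (nhds (∏' i : ℕ, (1 - q ^ (i + 1)))⁻¹) := by
  rw [← Nat.map_cast_int_atTop, tendsto_map'_iff]
  simp only [Function.comp_def, invQPochhammer_natCast, Finset.prod_inv_distrib]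
  exact (multipliable_one_sub_pow_comp (fun n => n.le_succ) hq).tendsto_prod_tprod_nat.inv₀
    (tprod_one_sub_pow_comp_ne_zero (fun n => n.lt_succ_self) hq)

lemma exists_norm_invQPochhammer_le (hq : ‖q‖ < 1) : ∃ B, ∀ k, ‖invQPochhammer q k‖ ≤ B := by
  obtain ⟨B, hB⟩ :=
    ((tendsto_invQPochhammer hq).comp tendsto_natCast_atTop_atTop).norm.bddAbove_range
  refine ⟨B, fun k => ?_⟩
  rcases lt_or_ge k 0 with hk | hk
  · rw [invQPochhammer_of_neg hk, norm_zero]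
    exact (norm_nonneg _).trans (hB ⟨0, rfl⟩)
  · lift k to ℕ using hk
    exact hB ⟨k, rfl⟩

lemma tendsto_tsum_tripleProductTerm (hq₀ : q ≠ 0) (hq : ‖q‖ < 1) (hw : w ≠ 0) :
    Tendsto (fun N => ∑' j, tripleProductTerm q w N N j) atTop
      (nhds ((∑' j : ℤ, q ^ j ^ 2 * w ^ j) *
        ((∏' i : ℕ, (1 - (q ^ 2) ^ (i + 1)))⁻¹ * (∏' i : ℕ, (1 - (q ^ 2) ^ (i + 1)))⁻¹))) := by
  have hq2 : ‖q ^ 2‖ < 1 := by simpa using pow_lt_one₀ (norm_nonneg q) hq two_ne_zero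
  obtain ⟨B, hB⟩ := exists_norm_invQPochhammer_le hq2
  rw [← tsum_mul_right]
  simp only [tripleProductTerm, mul_right_comm _ (invQPochhammer _ _ * invQPochhammer _ _)]
  refine tendsto_tsum_of_dominated_convergence
    ((summable_norm_zpow_sq_mul_zpow hq₀ hq hw).mul_right (B * B)) (fun j => ?_)
    (.of_forall fun N j => ?_)
  · have hpoch := tendsto_invQPochhammer hq2
    have hsub : Tendsto (fun N : ℕ => (N : ℤ) - j) atTop atTop :=
      tendsto_atTop_add_const_right _ (-j) tendsto_natCast_atTop_atTop
    have hadd : Tendsto (fun N : ℕ => (N : ℤ) + j) atTop atTop :=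
      tendsto_atTop_add_const_right _ j tendsto_natCast_atTop_atTop
    exact ((hpoch.comp hsub).mul (hpoch.comp hadd)).const_mul _
  · rw [norm_mul, norm_mul (invQPochhammer _ _)]
    have hB₀ : 0 ≤ B := (norm_nonneg _).trans (hB 0)
    gcongr <;> apply hB

theorem hasSum_jacobi_tripleProduct (hq₀ : q ≠ 0) (hq : ‖q‖ < 1) (hw : w ≠ 0) :
    HasSum (fun j : ℤ => q ^ j ^ 2 * w ^ j)
      ((∏' i : ℕ, (1 - (q ^ 2) ^ (i + 1))) * (∏' m : ℕ, (1 + q ^ (2 * m + 1) * w)) *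
        ∏' m : ℕ, (1 + q ^ (2 * m + 1) * w⁻¹)) := by
  have hq2 : ‖q ^ 2‖ < 1 := by simpa using pow_lt_one₀ (norm_nonneg q) hq two_ne_zero
  set G := ∏' i : ℕ, (1 - (q ^ 2) ^ (i + 1))
  set P := ∏' m : ℕ, (1 + q ^ (2 * m + 1) * w)
  set P' := ∏' m : ℕ, (1 + q ^ (2 * m + 1) * w⁻¹)
  have hG : G ≠ 0 := tprod_one_sub_pow_comp_ne_zero (fun n => n.lt_succ_self) hq2
  have hfinite (N : ℕ) := (hasSum_tripleProductTerm hq₀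
    (fun n => pow_ne_one_of_norm_lt_one hq2 n.succ_ne_zero) hw N N).tsum_eq
  have hpoch : Tendsto (fun N : ℕ => invQPochhammer (q ^ 2) (N + N : ℕ)) atTop (nhds G⁻¹) :=
    (tendsto_invQPochhammer hq2).comp (tendsto_natCast_atTop_atTop.comp
      (tendsto_atTop_mono (fun N => N.le_add_left N) tendsto_id))
  have hprod := (((multipliable_one_add_pow_mul hq w).tendsto_prod_tprod_nat.mul
    (multipliable_one_add_pow_mul hq w⁻¹).tendsto_prod_tprod_nat).mul hpoch).congr
      fun N => (hfinite N).symm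
  have htsum : (∑' j : ℤ, q ^ j ^ 2 * w ^ j) * (G⁻¹ * G⁻¹) = _ :=
    tendsto_nhds_unique (tendsto_tsum_tripleProductTerm hq₀ hq hw) hprod
  refine (summable_norm_zpow_sq_mul_zpow hq₀ hq hw).of_norm.hasSum_iff.2 ?_
  have hinv := mul_inv_cancel₀ hG
  linear_combination G ^ 2 * htsum +
    (G * P * P' - (∑' j : ℤ, q ^ j ^ 2 * w ^ j) * (G * G⁻¹ + 1)) * hinv

end TripleProduct

section CosProduct

variable {r : ℕ → ℝ} {u v : ℝ}

lemma tprod_le_tprod_of_nonneg {ι : Type*} {f g : ι → ℝ} (hf₀ : ∀ i, 0 ≤ f i)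
    (hfg : ∀ i, f i ≤ g i) (hf : Multipliable f) (hg : Multipliable g) :
    ∏' i, f i ≤ ∏' i, g i :=
  le_of_tendsto_of_tendsto' hf.hasProd hg.hasProd fun _ =>
    Finset.prod_le_prod (fun i _ => hf₀ i) fun i _ => hfg i

/-- The product `∏ (1 + 2 r_m u + r_m²)`, which for `u = cos z` is `∏ |1 + r_m e^{iz}|²`. With
`r_m = q^{2m+1}` it is the factor depending on `z` in the triple product for `∑ q^{j²} e^{ijz}`. -/
noncomputable def cosProduct (r : ℕ → ℝ) (u : ℝ) : ℝ := ∏' m, (1 + 2 * r m * u + r m ^ 2)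

lemma one_sub_sq_le_of_neg_one_le {ρ : ℝ} (hρ : 0 ≤ ρ) (hv : -1 ≤ v) :
    (1 - ρ) ^ 2 ≤ 1 + 2 * ρ * v + ρ ^ 2 := by
  nlinarith

lemma multipliable_cosProduct (hr : Summable fun m => ‖r m‖) (u : ℝ) :
    Multipliable fun m => 1 + 2 * r m * u + r m ^ 2 := by
  have hsq : Summable fun m => r m ^ 2 := by
    obtain ⟨B, hB⟩ := hr.tendsto_atTop_zero.bddAbove_range
    refine .of_norm_bounded (hr.mul_left B) fun m => ?_
    rw [norm_pow, sq]
    gcongr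
    exact hB ⟨m, rfl⟩
  simp only [add_assoc]
  refine multipliable_one_add_of_summable (Summable.norm ?_)
  exact ((hr.of_norm.mul_left 2).mul_right u).add hsq

lemma multipliable_one_sub_sq (hr : Summable fun m => ‖r m‖) :
    Multipliable fun m => (1 - r m) ^ 2 := by
  convert multipliable_cosProduct hr (-1) using 2
  ring

lemma cosProduct_eq_zero_mul (hr : Summable fun m => ‖r m‖) (u : ℝ) :
    cosProduct r u = (1 + 2 * r 0 * u + r 0 ^ 2) * cosProduct (fun m => r (m + 1)) u :=
  tprod_eq_zero_mul' (multipliable_cosProduct ((summable_nat_add_iff 1).2 hr) u)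

lemma cosProduct_mono (hr₀ : ∀ m, 0 ≤ r m) (hr : Summable fun m => ‖r m‖) (hv : -1 ≤ v)
    (huv : v ≤ u) : cosProduct r v ≤ cosProduct r u := by
  refine tprod_le_tprod_of_nonneg (fun m => ?_) (fun m => ?_) (multipliable_cosProduct hr v)
    (multipliable_cosProduct hr u)
  · exact (sq_nonneg _).trans (one_sub_sq_le_of_neg_one_le (hr₀ m) hv)
  · have := hr₀ m
    gcongr

lemma tprod_one_sub_sq_le_cosProduct (hr₀ : ∀ m, 0 ≤ r m) (hr : Summable fun m => ‖r m‖)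
    (hv : -1 ≤ v) : ∏' m, (1 - r m) ^ 2 ≤ cosProduct r v :=
  tprod_le_tprod_of_nonneg (fun _ => sq_nonneg _)
    (fun m => one_sub_sq_le_of_neg_one_le (hr₀ m) hv) (multipliable_one_sub_sq hr)
    (multipliable_cosProduct hr v)

theorem mul_sub_le_cosProduct_sub (hr₀ : ∀ m, 0 ≤ r m) (hr : Summable fun m => ‖r m‖)
    (hv : -1 ≤ v) (huv : v ≤ u) :
    2 * r 0 * (∏' m, (1 - r (m + 1)) ^ 2) * (u - v) ≤ cosProduct r u - cosProduct r v := by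
  set T := cosProduct fun m => r (m + 1)
  have hr₀' (m : ℕ) : 0 ≤ r (m + 1) := hr₀ (m + 1)
  have hr' : Summable fun m => ‖r (m + 1)‖ := (summable_nat_add_iff 1).2 hr
  have hfactor : 0 ≤ 1 + 2 * r 0 * u + r 0 ^ 2 :=
    (sq_nonneg _).trans (one_sub_sq_le_of_neg_one_le (hr₀ 0) (hv.trans huv))
  have hcoeff : 0 ≤ 2 * r 0 * (u - v) := by
    have := hr₀ 0
    have := sub_nonneg.2 huv
    positivity
  calc 2 * r 0 * (∏' m, (1 - r (m + 1)) ^ 2) * (u - v)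
      = 2 * r 0 * (u - v) * ∏' m, (1 - r (m + 1)) ^ 2 := by ring
    _ ≤ 2 * r 0 * (u - v) * T v := by
        gcongr
        exact tprod_one_sub_sq_le_cosProduct hr₀' hr' hv
    _ = (1 + 2 * r 0 * u + r 0 ^ 2) * T v - (1 + 2 * r 0 * v + r 0 ^ 2) * T v := by ring
    _ ≤ (1 + 2 * r 0 * u + r 0 ^ 2) * T u - (1 + 2 * r 0 * v + r 0 ^ 2) * T v := by
        gcongr
        exact cosProduct_mono hr₀' hr' hv huv
    _ = cosProduct r u - cosProduct r v := by
        rw [cosProduct_eq_zero_mul hr u, cosProduct_eq_zero_mul hr v]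

end CosProduct

section SineKernel

variable {q : ℝ}

lemma summable_norm_pow_odd (hq : ‖q‖ < 1) : Summable fun m : ℕ => ‖q ^ (2 * m + 1)‖ :=
  summable_norm_pow_comp (fun n => by omega) hq

lemma tprod_mul_tprod_eq_cosProduct (hq : ‖q‖ < 1) (z : ℝ) :
    (∏' m : ℕ, (1 + (q : ℂ) ^ (2 * m + 1) * Complex.exp (z * Complex.I))) *
        ∏' m : ℕ, (1 + (q : ℂ) ^ (2 * m + 1) * (Complex.exp (z * Complex.I))⁻¹) =
      (cosProduct (fun m => q ^ (2 * m + 1)) (cos z) : ℝ) := by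
  have hnorm : ‖(q : ℂ)‖ < 1 := by rwa [Complex.norm_real]
  rw [← (multipliable_one_add_pow_mul hnorm _).tprod_mul (multipliable_one_add_pow_mul hnorm _)]
  have hmap := (multipliable_cosProduct (summable_norm_pow_odd hq) (cos z)).map_tprod
    Complex.ofRealHom Complex.continuous_ofReal
  refine (tprod_congr fun m => ?_).trans hmap.symm
  have hcos : Complex.exp (z * Complex.I) + (Complex.exp (z * Complex.I))⁻¹ =
      2 * Complex.cos z := by
    rw [Complex.two_cos, ← Complex.exp_neg, neg_mul]
  have hinv := mul_inv_cancel₀ (Complex.exp_ne_zero (z * Complex.I))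
  simp only [Complex.ofRealHom_eq_coe]
  push_cast
  linear_combination (q : ℂ) ^ (2 * m + 1) * hcos + ((q : ℂ) ^ (2 * m + 1)) ^ 2 * hinv

theorem hasSum_pow_sq_mul_cos (hq₀ : q ≠ 0) (hq : ‖q‖ < 1) (z : ℝ) :
    HasSum (fun j : ℤ => q ^ j ^ 2 * cos (j * z))
      ((∏' i : ℕ, (1 - (q ^ 2) ^ (i + 1))) *
        cosProduct (fun m => q ^ (2 * m + 1)) (cos z)) := by
  have hnorm : ‖(q : ℂ)‖ < 1 := by rwa [Complex.norm_real]
  have hnorm2 : ‖q ^ 2‖ < 1 := by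
    rw [norm_pow]
    exact pow_lt_one₀ (norm_nonneg q) hq two_ne_zero
  have hconst := (multipliable_one_sub_pow_comp (fun n => n.le_succ) hnorm2).map_tprod
    Complex.ofRealHom Complex.continuous_ofReal
  have h := hasSum_jacobi_tripleProduct (Complex.ofReal_ne_zero.2 hq₀) hnorm
    (Complex.exp_ne_zero (z * Complex.I))
  rw [mul_assoc, tprod_mul_tprod_eq_cosProduct hq] at h
  simp only [Complex.ofRealHom_eq_coe, Complex.ofReal_sub, Complex.ofReal_pow,
    Complex.ofReal_one] at hconst
  rw [← hconst, ← Complex.ofReal_mul] at h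
  refine (Complex.hasSum_re h).congr_fun fun j => ?_
  rw [← Complex.exp_int_mul, ← mul_assoc, ← Complex.ofReal_zpow, Complex.re_ofReal_mul,
    ← Complex.ofReal_intCast, ← Complex.ofReal_mul, Complex.exp_ofReal_mul_I_re]

/-- The series `∑_{n ≥ 1} q^{n²} sin(nα) sin(nβ)`: the Dirichlet heat kernel of an interval, up to
the normalization of time, space and mass. -/
noncomputable def sineKernel (q α β : ℝ) : ℝ :=
  ∑' n : ℕ, q ^ (n + 1) ^ 2 * sin ((n + 1) * α) * sin ((n + 1) * β)

theorem four_mul_sineKernel (hq₀ : q ≠ 0) (hq : ‖q‖ < 1) (α β : ℝ) :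
    4 * sineKernel q α β = (∏' i : ℕ, (1 - (q ^ 2) ^ (i + 1))) *
      (cosProduct (fun m => q ^ (2 * m + 1)) (cos (α - β)) -
        cosProduct (fun m => q ^ (2 * m + 1)) (cos (α + β))) := by
  let f : ℤ → ℝ := fun j => 2 * (q ^ j ^ 2 * sin (j * α) * sin (j * β))
  have hf : HasSum f _ := ((hasSum_pow_sq_mul_cos hq₀ hq (α - β)).sub
    (hasSum_pow_sq_mul_cos hq₀ hq (α + β))).congr_fun fun j => by
      simp only [f, mul_sub, mul_add, cos_sub, cos_add]
      ring
  have heven : f.Even := fun j => by simp [f]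
  rw [mul_sub, ← hf.tsum_eq, tsum_int_eq_zero_add_two_mul_tsum_pnat heven hf.summable,
    tsum_pnat_eq_tsum_succ (f := fun n : ℕ => f n)]
  have hsucc (n : ℕ) :
      f (n + 1 : ℕ) = 2 * (q ^ (n + 1) ^ 2 * sin ((n + 1) * α) * sin ((n + 1) * β)) := by
    simp only [f]
    push_cast
    norm_cast
  rw [sineKernel]
  simp only [hsucc, tsum_mul_left]
  simp only [f, Int.cast_zero, zero_mul, sin_zero, mul_zero, nsmul_eq_mul, Nat.cast_ofNat]
  ring

lemma tprod_one_sub_pow_comp_pos {e : ℕ → ℕ} (he : ∀ n, n < e n) (hq₀ : 0 ≤ q) (hq₁ : q < 1) :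
    0 < ∏' i, (1 - q ^ e i) :=
  lt_of_le_of_ne (tprod_nonneg fun _ => sub_nonneg.2 (pow_le_one₀ hq₀ hq₁.le))
    (tprod_one_sub_pow_comp_ne_zero he (by rwa [norm_of_nonneg hq₀])).symm

theorem exists_pos_mul_le_sineKernel (hq₀ : 0 < q) (hq₁ : q < 1) :
    ∃ c, 0 < c ∧ ∀ α β, 0 ≤ sin α * sin β → c * (sin α * sin β) ≤ sineKernel q α β := by
  have hnorm : ‖q‖ < 1 := by rwa [norm_of_nonneg hq₀.le]
  set G := ∏' i : ℕ, (1 - (q ^ 2) ^ (i + 1))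
  set T := ∏' m : ℕ, (1 - q ^ (2 * (m + 1) + 1)) ^ 2
  have hG : 0 < G := tprod_one_sub_pow_comp_pos (fun n => n.lt_succ_self) (sq_nonneg q)
    (pow_lt_one₀ hq₀.le hq₁ two_ne_zero)
  have hT : 0 < T := by
    have hodd (m : ℕ) : m < 2 * (m + 1) + 1 := by omega
    refine (pow_pos (tprod_one_sub_pow_comp_pos hodd hq₀.le hq₁) 2).trans_eq ?_
    exact ((multipliable_one_sub_pow_comp (fun m => (hodd m).le) hnorm).tprod_pow 2).symm
  refine ⟨q * G * T, by positivity, fun α β hαβ => ?_⟩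
  have hcos : cos (α - β) - cos (α + β) = 2 * (sin α * sin β) := by
    rw [cos_sub, cos_add]
    ring
  have hbound := mul_sub_le_cosProduct_sub (r := fun m => q ^ (2 * m + 1))
    (fun m => by positivity) (summable_norm_pow_odd hnorm) (neg_one_le_cos (α + β))
    (u := cos (α - β)) (by linarith)
  rw [hcos] at hbound
  have hmul := mul_le_mul_of_nonneg_left hbound hG.le
  rw [← four_mul_sineKernel hq₀.ne' hnorm] at hmul
  simp only [mul_zero, zero_add, pow_one] at hmul
  linarith

lemma abs_sin_nat_mul_le (n : ℕ) (x : ℝ) : |sin (n * x)| ≤ n * |sin x| := by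
  induction n with
  | zero => simp
  | succ n ih =>
    calc |sin ((n + 1 : ℕ) * x)| = |sin (n * x) * cos x + cos (n * x) * sin x| := by
          rw [← sin_add, Nat.cast_succ, add_one_mul]
      _ ≤ |sin (n * x)| * |cos x| + |cos (n * x)| * |sin x| := by
          simpa only [abs_mul] using abs_add_le (sin (n * x) * cos x) (cos (n * x) * sin x)
      _ ≤ n * |sin x| * 1 + 1 * |sin x| := by
          gcongr
          exacts [abs_cos_le_one x, abs_cos_le_one _]
      _ = (n + 1 : ℕ) * |sin x| := by
          push_cast
          ring

lemma summable_pow_sq_mul_sq (hq₀ : 0 ≤ q) (hq₁ : q < 1) :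
    Summable fun n : ℕ => q ^ (n + 1) ^ 2 * ((n : ℝ) + 1) ^ 2 := by
  have hgeom : Summable fun n : ℕ => (n : ℝ) ^ 2 * q ^ n :=
    summable_pow_mul_geometric_of_norm_lt_one 2 (by rwa [norm_of_nonneg hq₀])
  refine Summable.of_nonneg_of_le (fun n => by positivity) (fun n => ?_)
    ((summable_nat_add_iff 1).2 hgeom)
  rw [mul_comm, Nat.cast_succ]
  exact mul_le_mul_of_nonneg_left
    (pow_le_pow_of_le_one hq₀ hq₁.le (Nat.le_self_pow two_ne_zero (n + 1))) (by positivity)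

theorem exists_pos_abs_sineKernel_le (hq₀ : 0 < q) (hq₁ : q < 1) :
    ∃ K, 0 < K ∧ ∀ α β, |sineKernel q α β| ≤ K * |sin α * sin β| := by
  have hsum := summable_pow_sq_mul_sq hq₀.le hq₁
  refine ⟨∑' n : ℕ, q ^ (n + 1) ^ 2 * ((n : ℝ) + 1) ^ 2,
    hsum.tsum_pos (fun n => by positivity) 0 (by positivity), fun α β => ?_⟩
  rw [sineKernel, ← norm_eq_abs]
  refine tsum_of_norm_bounded (hsum.hasSum.mul_right |sin α * sin β|) fun n => ?_
  have hα := abs_sin_nat_mul_le (n + 1) α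
  have hβ := abs_sin_nat_mul_le (n + 1) β
  push_cast at hα hβ
  calc ‖q ^ (n + 1) ^ 2 * sin ((n + 1) * α) * sin ((n + 1) * β)‖
      = q ^ (n + 1) ^ 2 * (|sin ((n + 1) * α)| * |sin ((n + 1) * β)|) := by
        rw [mul_assoc, norm_mul, norm_mul, norm_of_nonneg (by positivity), norm_eq_abs, norm_eq_abs]
    _ ≤ q ^ (n + 1) ^ 2 * (((n + 1) * |sin α|) * ((n + 1) * |sin β|)) := by gcongr
    _ = q ^ (n + 1) ^ 2 * ((n : ℝ) + 1) ^ 2 * |sin α * sin β| := by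
        rw [abs_mul]
        ring

end SineKernel

lemma pker_eq_sineKernel (a t x y : ℝ) :
    pker a t x y =
      2 / a * sineKernel (exp (-(π ^ 2 * t / (2 * a ^ 2)))) (π * x / a) (π * y / a) := by
  rw [pker, sineKernel]
  congr 2 with n
  rw [← exp_nat_mul]
  congr 3 <;> push_cast <;> ring

lemma sin_pi_mul_div_nonneg {a x : ℝ} (hx : x ∈ Icc 0 a) : 0 ≤ sin (π * x / a) := by
  rw [mul_div_assoc]
  have ha : 0 ≤ a := hx.1.trans hx.2
  exact sin_nonneg_of_nonneg_of_le_pi (mul_nonneg pi_pos.le (div_nonneg hx.1 ha))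
    (mul_le_of_le_one_right pi_pos.le (div_le_one_of_le₀ hx.2 ha))

theorem stmt4_general {a t : ℝ} (ha : 0 < a) (ht : 0 < t) :
    ∃ C : ℝ, 0 < C ∧ C ≤ 1 ∧ ∀ x ∈ Icc 0 a, ∀ y ∈ Icc 0 a,
      2 / a * C * sin (π * x / a) * sin (π * y / a) ≤ pker a t x y ∧
      pker a t x y ≤ 2 / a * C⁻¹ * sin (π * x / a) * sin (π * y / a) := by
  have hq₁ : exp (-(π ^ 2 * t / (2 * a ^ 2))) < 1 :=
    exp_lt_one_iff.2 (neg_neg_of_pos (by positivity))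
  obtain ⟨c, hc, hlower⟩ := exists_pos_mul_le_sineKernel (exp_pos _) hq₁
  obtain ⟨K, hK, hupper⟩ := exists_pos_abs_sineKernel_le (exp_pos _) hq₁
  obtain ⟨C, hC, hC₁, hCc, hCK⟩ : ∃ C, 0 < C ∧ C ≤ 1 ∧ C ≤ c ∧ C ≤ K⁻¹ :=
    ⟨min 1 (min c K⁻¹), by positivity, by simp, by simp, by simp⟩
  refine ⟨C, hC, hC₁, fun x hx y hy => ?_⟩
  have hsin := mul_nonneg (sin_pi_mul_div_nonneg hx) (sin_pi_mul_div_nonneg hy)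
  rw [pker_eq_sineKernel, mul_assoc (_ * C), mul_assoc (_ * C⁻¹), mul_assoc (2 / a),
    mul_assoc (2 / a)]
  constructor
  · gcongr
    exact (mul_le_mul_of_nonneg_right hCc hsin).trans (hlower _ _ hsin)
  · gcongr
    calc _ ≤ K * |sin (π * x / a) * sin (π * y / a)| := (le_abs_self _).trans (hupper _ _)
      _ ≤ C⁻¹ * (sin (π * x / a) * sin (π * y / a)) := by
          rw [abs_of_nonneg hsin]
          gcongr
          exact (le_inv_comm₀ hK hC).2 hCK

/-- For every `t > 0` there is a constant `C ∈ (0,1]` with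
`2C·sin(πx)·sin(πy) ≤ p¹_t(x,y) ≤ 2C⁻¹·sin(πx)·sin(πy)` on `[0,1]²`. -/
theorem stmt4 (t : ℝ) (ht : 0 < t) :
    ∃ C : ℝ, 0 < C ∧ C ≤ 1 ∧ ∀ x ∈ Set.Icc (0:ℝ) 1, ∀ y ∈ Set.Icc (0:ℝ) 1,
      2 * C * Real.sin (π * x) * Real.sin (π * y) ≤ pker 1 t x y ∧
      pker 1 t x y ≤ 2 * C⁻¹ * Real.sin (π * x) * Real.sin (π * y) := by
  simpa only [div_one] using stmt4_general one_pos ht
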